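/- Assume in addition the Poincaré inequality ‖v‖² ≤ Q·a(v,v) for all v ∈ E with a constant Q > 0. Let u_H⁰,…,u_Hⁿ ∈ V_ms be an implicit Euler Galerkin solution in V_ms and p_l⁰,…,p_lⁿ ∈ Q_l an implicit Euler Galerkin solution in Q_l, both for the form a, the same time step Δt > 0 and the same data f¹,…,fⁿ. Set d^j = u_H^j − S u_H^j, q^j = S u_H^j − p_l^j, and z^j = (S(u_H^j − u_H^{j−1}) − (u_H^j − u_H^{j−1}))/Δt. Then for every j = 1,…,n one has ‖q^j‖² ≤ ‖q^{j−1}‖² + Δt·(‖d^j‖_a² + Q²·‖z^j‖_a²). -/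

import Mathlib

open RealInnerProductSpace

/-!
Put `w = S u`, `d = u - w`, `q = w - p`, and let `z` be the difference quotient in time of `w - u`.
Subtracting the two schemes cancels `f`, so `q` satisfies the implicit Euler scheme with data `z`
and the additional load `-a(d, ·)`. Testing with `q` itself produces the dissipation `2 Δt a(q, q)`.
One half of it absorbs `-2 Δt a(d, q)` by Young's inequality for `a`; the other half absorbs
`2 Δt ⟪z, q⟫` by Young's inequality with weight `Q` for the inner product, combined with the
Poincaré inequality for both `z` and `q`.
-/

theorem neg_two_mul_apply_le_add {R M : Type*} [CommRing R] [LinearOrder R] [IsStrictOrderedRing R]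
    [AddCommGroup M] [Module R M] {a : M →ₗ[R] M →ₗ[R] R}
    (hsymm : ∀ x y, a x y = a y x) (hnonneg : ∀ x, 0 ≤ a x x) (x y : M) :
    -(2 * a x y) ≤ a x x + a y y := by
  have expand : a (x + y) (x + y) = a x x + 2 * a x y + a y y := by
    simp only [map_add, LinearMap.add_apply, hsymm y x]
    ring
  linarith [hnonneg (x + y)]

section Energy

variable {E : Type*} [SeminormedAddCommGroup E] [InnerProductSpace ℝ E]

theorem norm_sq_sub_norm_sq_le_two_mul_inner (x y : E) :
    ‖x‖ ^ 2 - ‖y‖ ^ 2 ≤ 2 * ⟪x - y, x⟫ := by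
  have polarization : 2 * ⟪x - y, x⟫ = ‖x‖ ^ 2 - ‖y‖ ^ 2 + ‖x - y‖ ^ 2 := by
    rw [norm_sub_sq_real, inner_sub_left, real_inner_self_eq_norm_sq, real_inner_comm]
    ring
  linarith [sq_nonneg ‖x - y‖]

theorem two_mul_inner_le_of_norm_sq_le {Q A B : ℝ} (hQ : 0 < Q) {x y : E}
    (hx : ‖x‖ ^ 2 ≤ Q * A) (hy : ‖y‖ ^ 2 ≤ Q * B) :
    2 * ⟪x, y⟫ ≤ Q ^ 2 * A + B := by
  have young : Q * (2 * ⟪x, y⟫) ≤ Q ^ 2 * ‖x‖ ^ 2 + ‖y‖ ^ 2 := by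
    have expand : ‖Q • x - y‖ ^ 2 = Q ^ 2 * ‖x‖ ^ 2 - Q * (2 * ⟪x, y⟫) + ‖y‖ ^ 2 := by
      rw [norm_sub_sq_real, real_inner_smul_left, norm_smul_of_nonneg hQ.le]
      ring
    linarith [sq_nonneg ‖Q • x - y‖]
  refine le_of_mul_le_mul_left ?_ hQ
  calc Q * (2 * ⟪x, y⟫) ≤ Q ^ 2 * ‖x‖ ^ 2 + ‖y‖ ^ 2 := young
    _ ≤ Q ^ 2 * (Q * A) + Q * B := by gcongr
    _ = Q * (Q ^ 2 * A + B) := by ring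

/-- The variational equation of one implicit Euler step from `u₀` to `u` with time step `Δt` and
data `f`, tested against `V`. The iterates themselves are not required to lie in `V`, so that a
Galerkin solution in a larger space can be compared with one in `V`. -/
def IsImplicitEulerStep (a : E →ₗ[ℝ] E →ₗ[ℝ] ℝ) (Δt : ℝ) (f : E) (V : Submodule ℝ E)
    (u₀ u : E) : Prop :=
  ∀ v ∈ V, ⟪u - u₀, v⟫ + Δt * a u v = Δt * ⟪f, v⟫

variable {a : E →ₗ[ℝ] E →ₗ[ℝ] ℝ} {Q Δt : ℝ}

theorem IsImplicitEulerStep.error_equation {f u₀ u p₀ p v : E} {V : Submodule ℝ E} (hΔt : Δt ≠ 0)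
    (hu : IsImplicitEulerStep a Δt f V u₀ u) (hp : IsImplicitEulerStep a Δt f V p₀ p)
    (w₀ w : E) (hv : v ∈ V) :
    ⟪(w - p) - (w₀ - p₀), v⟫ + Δt * a (w - p) v
      = Δt * (⟪Δt⁻¹ • ((w - w₀) - (u - u₀)), v⟫ - a (u - w) v) := by
  have hu_v := hu v hv
  have hp_v := hp v hv
  rw [mul_sub, real_inner_smul_left, mul_inv_cancel_left₀ hΔt]
  simp only [inner_sub_left, map_sub, LinearMap.sub_apply] at hu_v hp_v ⊢
  linarith

theorem norm_sq_le_of_energy_inequality (hsymm : ∀ u v, a u v = a v u) (hQ : 0 < Q)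
    (hpoin : ∀ v, ‖v‖ ^ 2 ≤ Q * a v v) (hΔt : 0 ≤ Δt) {q₀ q d z : E}
    (henergy : ⟪q - q₀, q⟫ + Δt * a q q ≤ Δt * (⟪z, q⟫ - a d q)) :
    ‖q‖ ^ 2 ≤ ‖q₀‖ ^ 2 + Δt * (a d d + Q ^ 2 * a z z) := by
  have hnonneg (v : E) : 0 ≤ a v v :=
    nonneg_of_mul_nonneg_right ((sq_nonneg ‖v‖).trans (hpoin v)) hQ
  have absorb : 2 * (⟪z, q⟫ - a d q) ≤ 2 * a q q + (a d d + Q ^ 2 * a z z) := by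
    linarith [neg_two_mul_apply_le_add hsymm hnonneg d q,
      two_mul_inner_le_of_norm_sq_le hQ (hpoin z) (hpoin q)]
  have increment : ‖q‖ ^ 2 - ‖q₀‖ ^ 2 ≤ Δt * (a d d + Q ^ 2 * a z z) := by
    calc ‖q‖ ^ 2 - ‖q₀‖ ^ 2 ≤ 2 * ⟪q - q₀, q⟫ := norm_sq_sub_norm_sq_le_two_mul_inner q q₀
      _ ≤ Δt * (2 * (⟪z, q⟫ - a d q) - 2 * a q q) := by linarith
      _ ≤ Δt * (a d d + Q ^ 2 * a z z) := by gcongr; linarith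
  linarith

theorem pod_one_step_estimate_general (hsymm : ∀ u v, a u v = a v u) (hQ : 0 < Q)
    (hpoin : ∀ v, ‖v‖ ^ 2 ≤ Q * a v v) {V : Submodule ℝ E} (hΔt : 0 < Δt)
    {f u₀ u p₀ p w₀ w : E} (hwp : w - p ∈ V)
    (hu : IsImplicitEulerStep a Δt f V u₀ u) (hp : IsImplicitEulerStep a Δt f V p₀ p) :
    ‖w - p‖ ^ 2 ≤ ‖w₀ - p₀‖ ^ 2 + Δt * (a (u - w) (u - w)
      + Q ^ 2 * a (Δt⁻¹ • ((w - w₀) - (u - u₀))) (Δt⁻¹ • ((w - w₀) - (u - u₀)))) :=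
  norm_sq_le_of_energy_inequality hsymm hQ hpoin hΔt.le
    (hu.error_equation hΔt.ne' hp w₀ w hwp).le

end Energy

/-- One-step estimate for `q^j = S u_H^j − p_l^j` with `d^j = u_H^j − S u_H^j` and
`z^j = (S(u_H^j − u_H^{j−1}) − (u_H^j − u_H^{j−1}))/Δt`:
`‖q^j‖² ≤ ‖q^{j−1}‖² + Δt·(‖d^j‖_a² + Q²·‖z^j‖_a²)`. -/
theorem pod_one_step_estimate
    {E : Type*} [NormedAddCommGroup E] [InnerProductSpace ℝ E]
    (a : E →ₗ[ℝ] E →ₗ[ℝ] ℝ)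
    (hsymm : ∀ u v : E, a u v = a v u)
    (hpsd : ∀ v : E, 0 ≤ a v v)
    (Q : ℝ) (hQ : 0 < Q)
    (hpoin : ∀ v : E, ‖v‖ ^ 2 ≤ Q * a v v)
    (Ql Vms : Submodule ℝ E) (hsub : Ql ≤ Vms)
    (S : E →ₗ[ℝ] E) (hSmem : ∀ x : E, S x ∈ Ql)
    (n : ℕ) (uH pl f : ℕ → E) (Δt : ℝ) (hΔt : 0 < Δt)
    (huHmem : ∀ j ≤ n, uH j ∈ Vms)
    (hplmem : ∀ j ≤ n, pl j ∈ Ql)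
    (hschemeH : ∀ j, 1 ≤ j → j ≤ n → ∀ v ∈ Vms,
      ⟪uH j - uH (j - 1), v⟫ + Δt * a (uH j) v = Δt * ⟪f j, v⟫)
    (hschemel : ∀ j, 1 ≤ j → j ≤ n → ∀ v ∈ Ql,
      ⟪pl j - pl (j - 1), v⟫ + Δt * a (pl j) v = Δt * ⟪f j, v⟫) :
    ∀ j, 1 ≤ j → j ≤ n →
      ‖S (uH j) - pl j‖ ^ 2
        ≤ ‖S (uH (j - 1)) - pl (j - 1)‖ ^ 2
          + Δt * (Real.sqrt (a (uH j - S (uH j)) (uH j - S (uH j))) ^ 2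
              + Q ^ 2 * Real.sqrt
                  (a (Δt⁻¹ • (S (uH j - uH (j - 1)) - (uH j - uH (j - 1))))
                     (Δt⁻¹ • (S (uH j - uH (j - 1)) - (uH j - uH (j - 1))))) ^ 2) := by
  intro j hj hjn
  rw [map_sub S, Real.sq_sqrt (hpsd _), Real.sq_sqrt (hpsd _)]
  exact pod_one_step_estimate_general hsymm hQ hpoin hΔt (Ql.sub_mem (hSmem _) (hplmem j hjn))
    (fun v hv => hschemeH j hj hjn v (hsub hv)) (hschemel j hj hjn)
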